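/- arXiv:2006.03363 — 5 statements merged into one kernel-verified Lean document; each statement's English description precedes it below -/
import Mathlib

section
/- Let an acyclic binary causal model be given. For every context u : U → Bool, every subset W ⊆ V, and every prescription w : V → Bool, there exists exactly one assignment v' : V → Bool such that v' i = w i for every i ∈ W and v' i = F i u v' for every i ∉ W. (In particular, taking W = ∅, the model has a unique actual evaluation for each context.) -/
/-!
Intervening on `W` replaces the structural equations of the variables in `W` by constants. The
modified equations still depend only on smaller variables, so it suffices to solve an acyclic
system without interventions: well-founded recursion constructs a solution, and well-founded
induction shows that any two solutions agree.
-/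

section AcyclicSystem

variable {V : Type*} {α : V → Type*} {r : V → V → Prop}

/-- A solution of the system of structural equations `x i = f i x`. The context is fixed and
absorbed into `f`, and each variable `i` takes values in its own type `α i`. -/
def IsSolution (f : ∀ i, (∀ j, α j) → α i) (x : ∀ i, α i) : Prop :=
  ∀ i, x i = f i x

open Classical in
/-- The structural equations after the intervention that sets the variables in `W` to the values
prescribed by `w`; only the values of `w` on `W` matter. -/
noncomputable def intervene (f : ∀ i, (∀ j, α j) → α i) (W : Set V) (w : ∀ i, α i) :
    ∀ i, (∀ j, α j) → α i :=
  W.piecewise (fun i _ ↦ w i) f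

theorem dependsOn_intervene {f : ∀ i, (∀ j, α j) → α i} {i : V} {s : Set V}
    (hf : DependsOn (f i) s) (W : Set V) (w : ∀ i, α i) :
    DependsOn (intervene f W w i) s := by
  intro x y hxy
  by_cases hi : i ∈ W
  · simp [intervene, hi]
  · simpa [intervene, hi] using hf hxy

theorem isSolution_intervene_iff {f : ∀ i, (∀ j, α j) → α i} {W : Set V} {w x : ∀ i, α i} :
    IsSolution (intervene f W w) x ↔ (∀ i ∈ W, x i = w i) ∧ ∀ i ∉ W, x i = f i x := by
  rw [← forall_and]
  refine forall_congr' fun i ↦ ?_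
  by_cases hi : i ∈ W <;> simp [intervene, hi]

theorem IsSolution.eq_of_dependsOn (hwf : WellFounded r) {f : ∀ i, (∀ j, α j) → α i}
    (hf : ∀ i, DependsOn (f i) {j | r j i}) {x y : ∀ i, α i}
    (hx : IsSolution f x) (hy : IsSolution f y) : x = y := by
  funext i
  induction i using hwf.induction with
  | _ i ih =>
    calc
      x i = f i x := hx i
      _ = f i y := hf i ih
      _ = y i := (hy i).symm

open Classical in
theorem exists_isSolution_of_dependsOn [Nonempty (∀ i, α i)] (hwf : WellFounded r)
    {f : ∀ i, (∀ j, α j) → α i} (hf : ∀ i, DependsOn (f i) {j | r j i}) :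
    ∃ x, IsSolution f x := by
  obtain ⟨x₀⟩ := ‹Nonempty (∀ i, α i)›
  -- The values of `x₀` only pad a partial assignment to a total one; `f i` does not see them.
  let step (i : V) (below : ∀ j, r j i → α j) : α i :=
    f i fun j ↦ if hj : r j i then below j hj else x₀ j
  refine ⟨hwf.fix step, fun i ↦ ?_⟩
  rw [hwf.fix_eq]
  exact hf i fun j hj ↦ dif_pos hj

theorem existsUnique_isSolution_of_dependsOn [Nonempty (∀ i, α i)] (hwf : WellFounded r)
    {f : ∀ i, (∀ j, α j) → α i} (hf : ∀ i, DependsOn (f i) {j | r j i}) :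
    ∃! x, IsSolution f x :=
  existsUnique_of_exists_of_unique (exists_isSolution_of_dependsOn hwf hf)
    fun _ _ ↦ IsSolution.eq_of_dependsOn hwf hf

theorem unique_solution_general (hwf : WellFounded r) {f : ∀ i, (∀ j, α j) → α i}
    (hf : ∀ i, DependsOn (f i) {j | r j i}) (W : Set V) (w : ∀ i, α i) :
    ∃! x : ∀ i, α i, (∀ i ∈ W, x i = w i) ∧ ∀ i ∉ W, x i = f i x := by
  have : Nonempty (∀ i, α i) := ⟨w⟩
  simpa only [isSolution_intervene_iff] using
    existsUnique_isSolution_of_dependsOn hwf fun i ↦ dependsOn_intervene (hf i) W w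

end AcyclicSystem

/-- In an acyclic binary causal model, for every context `u`,
every subset `W ⊆ V` and every prescription `w`, there is exactly one
assignment `v'` that equals `w` on `W` and follows the structural equations
outside `W`. -/
theorem unique_solution
    {U V : Type*} [Fintype U] [Fintype V]
    (F : V → (U → Bool) → (V → Bool) → Bool)
    (r : V → V → Prop) (hwf : WellFounded r)
    (hdep : ∀ (i : V) (u : U → Bool) (w w' : V → Bool),
      (∀ j, r j i → w j = w' j) → F i u w = F i u w')
    (u : U → Bool) (W : Set V) (w : V → Bool) :
    ∃! v' : V → Bool,
      (∀ i ∈ W, v' i = w i) ∧ (∀ i ∉ W, v' i = F i u v') :=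
  unique_solution_general hwf (fun i ↦ hdep i u) W w
end

section
/- Theorem (soundness of the ILP/MaxSAT checking encoding): There exists an assignment v' : V → Bool satisfying formula G (i.e. φ v' = false and for every i ∉ X either v' i = F i u v' or v' i = v i) with v' i ≠ v i for at least one i ∈ X, if and only if there exists a nonempty subset S ⊆ X such that condition AC2 holds for S. -/
/-- Condition AC2 for a candidate cause `X`. -/
def AC2 {U V : Type*} (F : V → (U → Bool) → (V → Bool) → Bool)
    (u : U → Bool) (v : V → Bool) (φ : (V → Bool) → Bool) (X : Set V) : Prop :=
  ∃ (W : Set V) (v' : V → Bool), W ∩ X = ∅ ∧ φ v' = false ∧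
    (∀ i ∈ X, v' i = !(v i)) ∧ (∀ i ∈ W, v' i = v i) ∧
    (∀ i ∉ X ∪ W, v' i = F i u v')

/-- `v'` satisfies the formula `G` of the candidate cause `X`: the effect `φ` fails, and every
variable outside `X` either obeys its structural equation or keeps its actual value. The
contingency set `W` of `AC2` is implicit here, as the set of variables keeping their actual value;
the variables in `X` are free, whereas `AC2` flips all of them. -/
def SatisfiesG {U V : Type*} (F : V → (U → Bool) → (V → Bool) → Bool)
    (u : U → Bool) (v : V → Bool) (φ : (V → Bool) → Bool) (X : Set V) (v' : V → Bool) : Prop :=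
  φ v' = false ∧ ∀ i ∉ X, v' i = F i u v' ∨ v' i = v i

section

variable {U V : Type*} {F : V → (U → Bool) → (V → Bool) → Bool} {u : U → Bool} {v v' : V → Bool}
  {φ : (V → Bool) → Bool} {S X : Set V}

theorem SatisfiesG.mono (hG : SatisfiesG F u v φ S v') (hSX : S ⊆ X) : SatisfiesG F u v φ X v' :=
  ⟨hG.1, fun i hiX => hG.2 i fun hiS => hiX (hSX hiS)⟩

theorem SatisfiesG.inter_ne (hG : SatisfiesG F u v φ X v') :
    SatisfiesG F u v φ (X ∩ {i | v' i ≠ v i}) v' := by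
  refine ⟨hG.1, fun i hi => ?_⟩
  by_cases hiX : i ∈ X
  · exact .inr (not_not.mp fun hne => hi ⟨hiX, hne⟩)
  · exact hG.2 i hiX

theorem ac2_iff_exists_satisfiesG :
    AC2 F u v φ S ↔ ∃ v', SatisfiesG F u v φ S v' ∧ ∀ i ∈ S, v' i ≠ v i := by
  constructor
  · rintro ⟨W, v', -, hφ', hflip, hfix, heqn⟩
    refine ⟨v', ⟨hφ', fun i hiS => ?_⟩, fun i hiS => Bool.eq_not.mp (hflip i hiS)⟩
    by_cases hiW : i ∈ W
    · exact .inr (hfix i hiW)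
    · exact .inl (heqn i (not_or.mpr ⟨hiS, hiW⟩))
  · rintro ⟨v', ⟨hφ', hG⟩, hne⟩
    have hdisj : Disjoint {i | v' i = v i} S :=
      Set.disjoint_left.mpr fun i hfix hiS => hne i hiS hfix
    refine ⟨{i | v' i = v i}, v', hdisj.inter_eq, hφ', fun i hiS => Bool.eq_not.mpr (hne i hiS),
      fun _ hfix => hfix, fun i hi => ?_⟩
    obtain ⟨hiS, hchanged⟩ := not_or.mp hi
    exact (hG i hiS).resolve_right hchanged

end

theorem formulaG_sat_iff_AC2_subset_general
    {U V : Type*} (F : V → (U → Bool) → (V → Bool) → Bool)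
    (u : U → Bool) (v : V → Bool) (_hv : ∀ i, v i = F i u v)
    (φ : (V → Bool) → Bool) (X : Set V) :
    (∃ v' : V → Bool, φ v' = false ∧
        (∀ i ∉ X, v' i = F i u v' ∨ v' i = v i) ∧
        (∃ i ∈ X, v' i ≠ v i)) ↔
      (∃ S : Set V, S ⊆ X ∧ S.Nonempty ∧ AC2 F u v φ S) := by
  constructor
  · rintro ⟨v', hφ', hG, hchange⟩
    have hGX : SatisfiesG F u v φ X v' := ⟨hφ', hG⟩
    exact ⟨X ∩ {i | v' i ≠ v i}, Set.inter_subset_left, hchange,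
      ac2_iff_exists_satisfiesG.mpr ⟨v', hGX.inter_ne, fun _ hi => hi.2⟩⟩
  · rintro ⟨S, hSX, ⟨i, hiS⟩, hAC2⟩
    obtain ⟨v', hGS, hne⟩ := ac2_iff_exists_satisfiesG.mp hAC2
    obtain ⟨hφ', hG⟩ := hGS.mono hSX
    exact ⟨v', hφ', hG, i, hSX hiS, hne i hiS⟩

/-- soundness of the ILP/MaxSAT checking encoding: formula `G`
has a solution flipping at least one variable of `X` iff AC2 holds for some
nonempty subset of `X`. -/
theorem formulaG_sat_iff_AC2_subset
    {U V : Type*} [Fintype U] [Fintype V]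
    (F : V → (U → Bool) → (V → Bool) → Bool)
    (r : V → V → Prop) (hwf : WellFounded r)
    (hdep : ∀ (i : V) (u : U → Bool) (w w' : V → Bool),
      (∀ j, r j i → w j = w' j) → F i u w = F i u w')
    (u : U → Bool) (v : V → Bool) (hv : ∀ i, v i = F i u v)
    (φ : (V → Bool) → Bool) (hφ : φ v = true) (X : Set V) :
    (∃ v' : V → Bool, φ v' = false ∧
        (∀ i ∉ X, v' i = F i u v' ∨ v' i = v i) ∧
        (∃ i ∈ X, v' i ≠ v i)) ↔
      (∃ S : Set V, S ⊆ X ∧ S.Nonempty ∧ AC2 F u v φ S) :=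
  formulaG_sat_iff_AC2_subset_general F u v hv φ X
end

section
/- (Counterfactual worlds contain a genuine cause variable.) Let v' : V → Bool be any assignment with φ v' = false. Then there exists a variable i ∈ V such that v' i ≠ v i and v' i ≠ F i u v', i.e. some variable deviates both from its actual value and from the value prescribed by its structural equation. -/
section

variable {ι : Type*} {r : ι → ι → Prop} {α : ι → Type*}

theorem exists_ne_and_forall_rel_eq_of_ne (hwf : WellFounded r) {v w : ∀ i, α i} (hne : v ≠ w) :
    ∃ i, v i ≠ w i ∧ ∀ j, r j i → v j = w j := by
  obtain ⟨i, hi, hmin⟩ := hwf.has_min {i | v i ≠ w i} (Function.ne_iff.mp hne)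
  exact ⟨i, hi, fun j hji => not_not.mp fun hj => hmin j hj hji⟩

/-- Here `F i` is the structural equation of the variable `i` with the context already fixed. -/
theorem counterfactual_has_cause_variable_general (hwf : WellFounded r)
    {F : ∀ i, (∀ j, α j) → α i} (hdep : ∀ i, DependsOn (F i) {j | r j i})
    {v v' : ∀ i, α i} (hv : ∀ i, v i = F i v) (hne : v' ≠ v) :
    ∃ i, v' i ≠ v i ∧ v' i ≠ F i v' := by
  obtain ⟨i, hi, heq_below⟩ := exists_ne_and_forall_rel_eq_of_ne hwf hne
  have prescribed_eq_actual : F i v' = v i := (hdep i heq_below).trans (hv i).symm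
  exact ⟨i, hi, prescribed_eq_actual ▸ hi⟩

end

/-- in any counterfactual world (an assignment falsifying the
effect), some variable deviates both from its actual value and from the value
prescribed by its structural equation. -/
theorem counterfactual_has_cause_variable
    {U V : Type*} [Fintype U] [Fintype V]
    (F : V → (U → Bool) → (V → Bool) → Bool)
    (r : V → V → Prop) (hwf : WellFounded r)
    (hdep : ∀ (i : V) (u : U → Bool) (w w' : V → Bool),
      (∀ j, r j i → w j = w' j) → F i u w = F i u w')
    (u : U → Bool) (v : V → Bool) (hv : ∀ i, v i = F i u v)
    (φ : (V → Bool) → Bool) (hφ : φ v = true)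
    (v' : V → Bool) (h1 : φ v' = false) :
    ∃ i : V, v' i ≠ v i ∧ v' i ≠ F i u v' := by
  have hne : v' ≠ v := ne_of_apply_ne φ (by simp [hφ, h1])
  exact counterfactual_has_cause_variable_general hwf (fun i => hdep i u) hv hne
end

section
/- (The non-emptiness hard clauses of the MaxSAT encoding are automatically satisfied.) If an assignment v' : V → Bool satisfies formula G for the candidate cause X (i.e. φ v' = false and for every i ∉ X either v' i = F i u v' or v' i = v i), then there exists i ∈ X with v' i ≠ v i and v' i ≠ F i u v'; in particular the distance set {i ∈ X : v' i ≠ v i} of any G-solution is nonempty. -/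
/-!
The effect separates `v'` from `v`, so the two assignments differ somewhere. At a minimal variable
`i` where they differ, `v'` and `v` agree on everything the equation of `i` reads, so that equation
still returns `v i`. Thus `v' i` is neither the actual value nor the value of its equation, which
formula `G` tolerates only for `i ∈ X`.
-/

section

variable {V : Type*} {α : V → Type*} {r : V → V → Prop} {v v' : ∀ i, α i}

theorem exists_ne_and_forall_rel_eq (hwf : WellFounded r) (hne : v' ≠ v) :
    ∃ i, v' i ≠ v i ∧ ∀ j, r j i → v' j = v j := by
  obtain ⟨i, hi, hmin⟩ := hwf.has_min {i | v' i ≠ v i} (Function.ne_iff.mp hne)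
  exact ⟨i, hi, fun j hji => not_not.mp fun hj => hmin j hj hji⟩

variable {F : ∀ i, (∀ j, α j) → α i}

theorem exists_ne_and_ne_equation (hwf : WellFounded r)
    (hdep : ∀ i, DependsOn (F i) {j | r j i}) (hv : ∀ i, v i = F i v) (hne : v' ≠ v) :
    ∃ i, v' i ≠ v i ∧ v' i ≠ F i v' := by
  obtain ⟨i, hi, hbelow⟩ := exists_ne_and_forall_rel_eq hwf hne
  have equation_eq : F i v' = v i := (hdep i hbelow).trans (hv i).symm
  exact ⟨i, hi, equation_eq.symm ▸ hi⟩

theorem G_solution_nonempty_cause_general (hwf : WellFounded r)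
    (hdep : ∀ i, DependsOn (F i) {j | r j i}) (hv : ∀ i, v i = F i v)
    {φ : (∀ i, α i) → Prop} (hφ : φ v) {X : Set V} (hφ' : ¬ φ v')
    (hG : ∀ i ∉ X, v' i = F i v' ∨ v' i = v i) :
    (∃ i ∈ X, v' i ≠ v i ∧ v' i ≠ F i v') ∧ {i | i ∈ X ∧ v' i ≠ v i}.Nonempty := by
  have hne : v' ≠ v := fun h => hφ' (h ▸ hφ)
  obtain ⟨i, hactual, hequation⟩ := exists_ne_and_ne_equation hwf hdep hv hne
  have hiX : i ∈ X := by
    by_contra hi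
    exact (hG i hi).elim hequation hactual
  exact ⟨⟨i, hiX, hactual, hequation⟩, ⟨i, hiX, hactual⟩⟩

end

/-- the non-emptiness hard clauses of the MaxSAT encoding are
automatically satisfied: any solution of formula `G` for candidate cause `X`
flips some variable of `X` away from both its actual value and its equation
value; in particular the distance set of a `G`-solution is nonempty. -/
theorem G_solution_nonempty_cause
    {U V : Type*} [Fintype U] [Fintype V]
    (F : V → (U → Bool) → (V → Bool) → Bool)
    (r : V → V → Prop) (hwf : WellFounded r)
    (hdep : ∀ (i : V) (u : U → Bool) (w w' : V → Bool),
      (∀ j, r j i → w j = w' j) → F i u w = F i u w')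
    (u : U → Bool) (v : V → Bool) (hv : ∀ i, v i = F i u v)
    (φ : (V → Bool) → Bool) (hφ : φ v = true) (X : Set V)
    (v' : V → Bool)
    (h1 : φ v' = false)
    (h2 : ∀ i ∉ X, v' i = F i u v' ∨ v' i = v i) :
    (∃ i ∈ X, v' i ≠ v i ∧ v' i ≠ F i u v') ∧
    ({i : V | i ∈ X ∧ v' i ≠ v i} : Set V).Nonempty := by
  exact G_solution_nonempty_cause_general (F := fun i => F i u) (φ := fun w => φ w = true)
    hwf (fun i w w' => hdep i u w w') hv hφ (Bool.eq_false_iff.mp h1) h2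
end

section
/- (Inference soundness, forward direction.) Suppose an assignment v' : V → Bool satisfies formula G* (i.e. φ v' = false and v' i = F i u v' for every i ∈ E). Then the set S := {i ∈ V : v' i ≠ v i and v' i ≠ F i u v'} is nonempty and disjoint from E, the set W := {i ∈ V : v' i = v i and v' i ≠ F i u v'} is disjoint from both S and E, and the pair (W, v') witnesses condition AC2 for S. -/
/-!
If no variable deviated from both its actual value and its equation, then every variable of `v'`
would keep its actual value or obey its equation. Well-founded induction then gives `v' = v`: once
the predecessors of `i` have their actual values, the equation at `i` returns the actual value too.
This is impossible, since `φ` separates `v` from `v'`.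
-/

section Equations

variable {V : Type*} {α : V → Type*}

/-- The variables whose structural equation fails under the assignment `w`. The context is fixed, so
`f i` is the equation of `i` as a function of the endogenous values alone. -/
def violationSet (f : ∀ i, (∀ j, α j) → α i) (w : ∀ i, α i) : Set V :=
  {i | w i ≠ f i w}

/-- The candidate cause `S` read off from `v'`: the variables that deviate both from their actual
value and from their structural equation. -/
def deviationSet (f : ∀ i, (∀ j, α j) → α i) (v v' : ∀ i, α i) : Set V :=
  {i | v' i ≠ v i ∧ v' i ≠ f i v'}

/-- The contingency set `W` read off from `v'`: the variables held at their actual value against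
their structural equation. -/
def contingencySet (f : ∀ i, (∀ j, α j) → α i) (v v' : ∀ i, α i) : Set V :=
  {i | v' i = v i ∧ v' i ≠ f i v'}

variable {f : ∀ i, (∀ j, α j) → α i} {r : V → V → Prop} {v v' : ∀ i, α i}

theorem eq_of_forall_eq_or_eq_equation (hwf : WellFounded r)
    (hdep : ∀ i, DependsOn (f i) {j | r j i}) (hv : ∀ i, v i = f i v)
    (h : ∀ i, v' i = v i ∨ v' i = f i v') : v' = v := by
  funext i
  induction i using hwf.induction with
  | _ i ih =>
    rcases h i with h_actual | h_equation
    · exact h_actual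
    · calc
        v' i = f i v' := h_equation
        _ = f i v := hdep i ih
        _ = v i := (hv i).symm

theorem deviationSet_nonempty_of_ne (hwf : WellFounded r)
    (hdep : ∀ i, DependsOn (f i) {j | r j i}) (hv : ∀ i, v i = f i v) (hne : v' ≠ v) :
    (deviationSet f v v').Nonempty := by
  contrapose! hne
  refine eq_of_forall_eq_or_eq_equation hwf hdep hv fun i => ?_
  have hi : i ∉ deviationSet f v v' := Set.eq_empty_iff_forall_notMem.mp hne i
  exact or_iff_not_and_not.mpr hi

theorem deviationSet_union_contingencySet :
    deviationSet f v v' ∪ contingencySet f v v' = violationSet f v' := by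
  ext i
  simp only [deviationSet, contingencySet, violationSet, Set.mem_union, Set.mem_ofPred_eq]
  tauto

theorem disjoint_contingencySet_deviationSet :
    Disjoint (contingencySet f v v') (deviationSet f v v') :=
  Set.disjoint_left.mpr fun _ hW hS => hS.1 hW.1

theorem disjoint_violationSet_iff {E : Set V} :
    Disjoint (violationSet f v) E ↔ ∀ i ∈ E, v i = f i v := by
  simp only [Set.disjoint_right, violationSet, Set.mem_ofPred_eq, not_not]

end Equations

section AC2

variable {V : Type*}

/-- `(W, v')` witnesses condition AC2 for `X`, where `v` is the actual evaluation, `φ` the effect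
and `f` the structural equations in the fixed context. -/
structure IsAC2Witness (f : V → (V → Bool) → Bool) (v : V → Bool) (φ : (V → Bool) → Bool)
    (X W : Set V) (v' : V → Bool) : Prop where
  disjoint : Disjoint W X
  effect_false : φ v' = false
  eq_not_of_mem : ∀ i ∈ X, v' i = !(v i)
  eq_of_mem : ∀ i ∈ W, v' i = v i
  eq_equation_of_notMem : ∀ i ∉ X ∪ W, v' i = f i v'

theorem isAC2Witness_deviationSet_contingencySet (f : V → (V → Bool) → Bool) (v : V → Bool)
    {φ : (V → Bool) → Bool} {v' : V → Bool} (hφ' : φ v' = false) :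
    IsAC2Witness f v φ (deviationSet f v v') (contingencySet f v v') v' where
  disjoint := disjoint_contingencySet_deviationSet
  effect_false := hφ'
  eq_not_of_mem _ hi := Bool.eq_not.mpr hi.1
  eq_of_mem _ hi := hi.1
  eq_equation_of_notMem i hi := by
    rw [deviationSet_union_contingencySet] at hi
    exact not_not.mp hi

theorem inference_forward_general {f : V → (V → Bool) → Bool} {r : V → V → Prop}
    (hwf : WellFounded r) (hdep : ∀ i, DependsOn (f i) {j | r j i})
    {v : V → Bool} (hv : ∀ i, v i = f i v) {φ : (V → Bool) → Bool} (hφ : φ v = true)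
    {E : Set V} {v' : V → Bool} (hφ' : φ v' = false) (hobey : ∀ i ∈ E, v' i = f i v') :
    (deviationSet f v v').Nonempty ∧ Disjoint (deviationSet f v v') E ∧
      Disjoint (contingencySet f v v') E ∧
      IsAC2Witness f v φ (deviationSet f v v') (contingencySet f v v') v' := by
  have hne : v' ≠ v := ne_of_apply_ne φ (by simp [hφ, hφ'])
  have hdisj : Disjoint (deviationSet f v v' ∪ contingencySet f v v') E := by
    rw [deviationSet_union_contingencySet]
    exact disjoint_violationSet_iff.mpr hobey
  obtain ⟨hS, hW⟩ := Set.disjoint_union_left.mp hdisj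
  exact ⟨deviationSet_nonempty_of_ne hwf hdep hv hne, hS, hW,
    isAC2Witness_deviationSet_contingencySet f v hφ'⟩

end AC2

/-- inference soundness, forward direction: from a solution `v'`
of formula `G*`, the sets `S` (variables deviating from both actual value and
equation) and `W` (variables keeping the actual value but not the equation)
give a nonempty cause `S` disjoint from the effect variables `E`, a
contingency set `W` disjoint from `S` and `E`, and `(W, v')` witnesses AC2
for `S`. -/
theorem inference_forward
    {U V : Type*} [Fintype U] [Fintype V]
    (F : V → (U → Bool) → (V → Bool) → Bool)
    (r : V → V → Prop) (hwf : WellFounded r)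
    (hdep : ∀ (i : V) (u : U → Bool) (w w' : V → Bool),
      (∀ j, r j i → w j = w' j) → F i u w = F i u w')
    (u : U → Bool) (v : V → Bool) (hv : ∀ i, v i = F i u v)
    (φ : (V → Bool) → Bool) (hφ : φ v = true)
    (E : Set V)
    (hE : ∀ a b : V → Bool, (∀ i ∈ E, a i = b i) → φ a = φ b)
    (v' : V → Bool)
    (h1 : φ v' = false)
    (h2 : ∀ i ∈ E, v' i = F i u v') :
    ({i : V | v' i ≠ v i ∧ v' i ≠ F i u v'} : Set V).Nonempty ∧
    {i : V | v' i ≠ v i ∧ v' i ≠ F i u v'} ∩ E = ∅ ∧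
    {i : V | v' i = v i ∧ v' i ≠ F i u v'} ∩
      {i : V | v' i ≠ v i ∧ v' i ≠ F i u v'} = ∅ ∧
    {i : V | v' i = v i ∧ v' i ≠ F i u v'} ∩ E = ∅ ∧
    φ v' = false ∧
    (∀ i ∈ {i : V | v' i ≠ v i ∧ v' i ≠ F i u v'}, v' i = !(v i)) ∧
    (∀ i ∈ {i : V | v' i = v i ∧ v' i ≠ F i u v'}, v' i = v i) ∧
    (∀ i ∉ {i : V | v' i ≠ v i ∧ v' i ≠ F i u v'} ∪
        {i : V | v' i = v i ∧ v' i ≠ F i u v'}, v' i = F i u v') := by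
  obtain ⟨hne, hSE, hWE, hWS, hφ', hS, hW, hrest⟩ :=
    inference_forward_general hwf (fun i _ _ => hdep i u _ _) hv hφ h1 h2
  exact ⟨hne, hSE.inter_eq, hWS.inter_eq, hWE.inter_eq, hφ', hS, hW, hrest⟩
end
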